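/- Let S be a d-set, n−1<d≤n, Q a cube centered in S with ℓ(Q) ≤ R, and P_{k,Q} the orthogonal projection of L^1(Q∩S) onto P_k with respect to ⟨f,g⟩=∫_{Q∩S} fg dH^d. Then there exist polynomials h_{Q,ν} ∈ P_k, |ν| ≤ k, with ‖h_{Q,ν}‖_{L^∞(Q)} ≤ C(S,R,n,k), such that for all f ∈ L^1(Q∩S): P_{k,Q} f(x) = ∑_{|ν|≤k} ( (1/H^d(Q∩S)) ∫_{Q∩S} f h_{Q,ν} dH^d ) (x−x_Q)^ν / ℓ(Q)^{|ν|}. -/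

import Mathlib

open Metric MeasureTheory
open scoped ENNReal

/-- Functions `ℝⁿ → ℝ` given by polynomials of degree at most `k`. -/
def degLE (n k : ℕ) : Set ((Fin n → ℝ) → ℝ) :=
  {P | ∃ q : MvPolynomial (Fin n) ℝ, q.totalDegree ≤ k ∧ ∀ x, P x = MvPolynomial.eval x q}

/-- The finite set of multi-indices `ν : Fin n → ℕ` with `|ν| = ∑ ν i ≤ k`. -/
def multiIdx (n k : ℕ) : Finset (Fin n → ℕ) :=
  (Fintype.piFinset fun _ : Fin n => Finset.range (k + 1)).filter fun ν => ∑ i, ν i ≤ k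

/-!
After rescaling a cube `Q` to unit scale, the formula is the expansion of `P_{k,Q} f` in monomials,
and the `h_{Q,ν}` are the dual basis of the monomials with respect to the inner product of
`L²(Q ∩ S)`. That basis is bounded uniformly in `Q` as soon as the Gram form is coercive with a
constant independent of `Q`.

For the coercivity, the zero set of a nonzero polynomial has Hausdorff dimension at most
`n - 1 < d`, so it is covered by balls `B(xᵢ, rᵢ)` with `∑ rᵢ ^ d` as small as we please. The union
of these balls then has mass at most `1 / 2` for all the normalized measures at once, because they
satisfy the same growth condition `σ (B(y, ρ)) ≤ K ρ ^ d`. On the rest of the unit cube the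
polynomial, and every polynomial with nearby coefficients, is bounded away from zero; compactness of
the unit sphere of coefficient vectors concludes.
-/

open MvPolynomial Filter Topology

section LevelSets

variable {E F : Type*} [NormedAddCommGroup E] [NormedSpace ℝ E] [FiniteDimensional ℝ E]
  [NormedAddCommGroup F] [NormedSpace ℝ F] [FiniteDimensional ℝ F]

lemma exists_nhds_dimH_levelSet_le {f : E → F} {f' : E →L[ℝ] F} {a : E}
    (hf : HasStrictFDerivAt f f' a) (hf' : f'.range = ⊤) :
    ∃ U ∈ 𝓝 a, dimH ({x | f x = f a} ∩ U) ≤ Module.finrank ℝ f'.ker := by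
  have := FiniteDimensional.complete ℝ E
  have := FiniteDimensional.complete ℝ F
  let Φ := hf.implicitToOpenPartialHomeomorph f f' hf'
  let g := hf.implicitFunction f f' hf' (f a)
  obtain ⟨K, s, hs, hg⟩ : ∃ K, ∃ s ∈ 𝓝 (0 : f'.ker), LipschitzOnWith K g s :=
    (hf.to_implicitFunction hf').exists_lipschitzOnWith
  have hΦ : Tendsto (fun x => (Φ x).2) (𝓝 a) (𝓝 0) := by
    have h := continuous_snd.continuousAt.comp
      (Φ.continuousAt (hf.mem_implicitToOpenPartialHomeomorph_source hf'))
    simpa [Φ, ContinuousAt, Function.comp_def] using h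
  refine ⟨_, (hf.eq_implicitFunction hf').and (hΦ hs), ?_⟩
  have hsub : {x | f x = f a} ∩ {x | hf.implicitFunction f f' hf' (f x) (Φ x).2 = x ∧
      (Φ x).2 ∈ s} ⊆ g '' s := by
    rintro x ⟨hx, hgx, hxs⟩
    exact ⟨(Φ x).2, hxs, (congrArg (hf.implicitFunction f f' hf' · _) hx).symm.trans hgx⟩
  calc dimH _ ≤ dimH (g '' s) := dimH_mono hsub
    _ ≤ dimH s := hg.dimH_image_le
    _ ≤ dimH (Set.univ : Set f'.ker) := dimH_mono (Set.subset_univ _)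
    _ = Module.finrank ℝ f'.ker := Real.dimH_univ_eq_finrank _

lemma exists_nhds_dimH_levelSet_le_of_ne_zero {f : E → ℝ} {f' : E →L[ℝ] ℝ} {a : E}
    (hf : HasStrictFDerivAt f f' a) (hf' : f' ≠ 0) :
    ∃ U ∈ 𝓝 a, dimH ({x | f x = f a} ∩ U) ≤ (Module.finrank ℝ E - 1 : ℕ) := by
  have hf'₀ : (f' : E →ₗ[ℝ] ℝ) ≠ 0 := fun h => hf' (ContinuousLinearMap.coe_injective h)
  obtain ⟨U, hU, hdim⟩ := exists_nhds_dimH_levelSet_le hf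
    (LinearMap.range_eq_top.2 (LinearMap.surjective hf'₀))
  refine ⟨U, hU, hdim.trans_eq ?_⟩
  have hker := Module.Dual.finrank_ker_add_one_of_ne_zero hf'₀
  exact congrArg Nat.cast (Nat.eq_sub_of_add_eq hker)

end LevelSets

section ZeroSets

lemma totalDegree_pderiv_lt {R σ : Type*} [CommSemiring R] {p : MvPolynomial σ R}
    (hp : p.totalDegree ≠ 0) (i : σ) : (pderiv i p).totalDegree < p.totalDegree := by
  rw [totalDegree, Finset.sup_lt_iff (Nat.pos_of_ne_zero hp)]
  intro m hm
  rw [mem_support_iff, coeff_pderiv] at hm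
  have hle := le_totalDegree (mem_support_iff.2 (left_ne_zero_of_mul hm))
  rw [Finsupp.sum_add_index' (fun _ => rfl) (fun _ _ _ => rfl), Finsupp.sum_single_index rfl] at hle
  exact Nat.lt_of_succ_le hle

lemma exists_pderiv_ne_zero {R σ : Type*} [CommSemiring R] [NoZeroDivisors R] [CharZero R]
    {p : MvPolynomial σ R} (hp : p.totalDegree ≠ 0) : ∃ i, pderiv i p ≠ 0 := by
  obtain ⟨m, hm, i, hi⟩ : ∃ m ∈ p.support, ∃ i, m i ≠ 0 := by
    simpa [totalDegree_eq_zero_iff] using hp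
  refine ⟨i, ne_zero_iff.2 ⟨m - Finsupp.single i 1, ?_⟩⟩
  have hle : Finsupp.single i 1 ≤ m := by
    simpa [Finsupp.single_le_iff] using Nat.one_le_iff_ne_zero.2 hi
  rw [coeff_pderiv, tsub_add_cancel_of_le hle]
  exact mul_ne_zero (mem_support_iff.1 hm) (Nat.cast_add_one_ne_zero _)

variable {ι : Type*} [Fintype ι]

lemma hasStrictFDerivAt_eval {𝕜 : Type*} [NontriviallyNormedField 𝕜] (p : MvPolynomial ι 𝕜)
    (x : ι → 𝕜) :
    HasStrictFDerivAt (fun y => eval y p)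
      (∑ i, eval x (pderiv i p) • (ContinuousLinearMap.proj i : (ι → 𝕜) →L[𝕜] 𝕜)) x := by
  classical
  induction p using MvPolynomial.induction_on with
  | C a =>
    simp only [eval_C]
    exact (hasStrictFDerivAt_const a x).congr_fderiv (by ext; simp)
  | add p q hp hq =>
    simp only [map_add]
    exact (hp.fun_add hq).congr_fderiv (by ext; simp [add_mul, Finset.sum_add_distrib])
  | mul_X p j hp =>
    have hX : HasStrictFDerivAt (fun y : ι → 𝕜 => y j)
        (ContinuousLinearMap.proj j : (ι → 𝕜) →L[𝕜] 𝕜) x :=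
      (ContinuousLinearMap.proj j : (ι → 𝕜) →L[𝕜] 𝕜).hasStrictFDerivAt
    simp only [map_mul, eval_X]
    refine (hp.mul hX).congr_fderiv ?_
    ext v
    simp [Derivation.leibniz, pderiv_X, Pi.single_apply, add_mul, Finset.sum_add_distrib,
      Finset.mul_sum, mul_assoc, apply_ite (eval x)]

lemma sum_eval_pderiv_smul_proj_ne_zero {𝕜 : Type*} [NontriviallyNormedField 𝕜]
    {p : MvPolynomial ι 𝕜} {x : ι → 𝕜} {i : ι} (hi : eval x (pderiv i p) ≠ 0) :
    ∑ i, eval x (pderiv i p) • (ContinuousLinearMap.proj i : (ι → 𝕜) →L[𝕜] 𝕜) ≠ 0 := by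
  classical
  intro h
  apply hi
  simpa [Pi.single_apply] using DFunLike.congr_fun h (Pi.single i 1)

/- Where some `∂ᵢp` does not vanish the zero set is locally a Lipschitz graph; the rest of it lies
in the zero set of `∂ᵢp`, which has smaller degree. -/
lemma dimH_eval_eq_zero_le {p : MvPolynomial ι ℝ} (hp : p ≠ 0) :
    dimH {x | eval x p = 0} ≤ (Fintype.card ι - 1 : ℕ) := by
  induction hm : p.totalDegree using Nat.strong_induction_on generalizing p with
  | _ m ih =>
  subst hm
  by_cases hdeg : p.totalDegree = 0
  · obtain ⟨c, rfl⟩ : ∃ c, p = C c := ⟨_, totalDegree_eq_zero_iff_eq_C.1 hdeg⟩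
    have hc : c ≠ 0 := fun h => hp (by rw [h, C_0])
    simp [hc]
  obtain ⟨i, hi⟩ := exists_pderiv_ne_zero hdeg
  set q := pderiv i p
  have hsub : {x | eval x p = 0} ⊆
      {x | eval x q = 0} ∪ {x | eval x p = 0 ∧ eval x q ≠ 0} := by
    intro x hx
    exact (em (eval x q = 0)).imp id fun h => ⟨hx, h⟩
  refine (dimH_mono hsub).trans ?_
  rw [dimH_union]
  refine max_le (ih _ (totalDegree_pderiv_lt hdeg i) hi rfl) ?_
  by_contra! hlt
  obtain ⟨x, ⟨hx, hqx⟩, hdim⟩ := exists_mem_nhdsWithin_lt_dimH_of_lt_dimH hlt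
  obtain ⟨U, hU, hUdim⟩ := exists_nhds_dimH_levelSet_le_of_ne_zero (hasStrictFDerivAt_eval p x)
    (sum_eval_pderiv_smul_proj_ne_zero hqx)
  rw [hx, Module.finrank_fintype_fun_eq_card] at hUdim
  refine (hdim _ (inter_mem self_mem_nhdsWithin (mem_nhdsWithin_of_mem_nhds hU))).not_ge ?_
  exact (dimH_mono (Set.inter_subset_inter_left U fun y hy => hy.1)).trans hUdim

lemma hausdorffMeasure_eval_eq_zero [Nonempty ι] {p : MvPolynomial ι ℝ} (hp : p ≠ 0) {d : ℝ}
    (hd : (Fintype.card ι : ℝ) - 1 < d) : μH[d] {x | eval x p = 0} = 0 := by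
  have hcard : 1 ≤ Fintype.card ι := Fintype.card_pos
  have hcard' : ((Fintype.card ι - 1 : ℕ) : ℝ) < d := by rwa [Nat.cast_sub hcard, Nat.cast_one]
  lift d to NNReal using (Nat.cast_nonneg _).trans hcard'.le
  refine hausdorffMeasure_of_dimH_lt ((dimH_eval_eq_zero_le hp).trans_lt ?_)
  exact_mod_cast hcard'

end ZeroSets

section Covers

variable {X : Type*} [MetricSpace X]

lemma exists_ball_superset {d : ℝ} (hd : 0 < d) [Nonempty X] {t : Set X} {ρ : ℝ}
    (ht : ediam t < ENNReal.ofReal ρ) {ε : ℝ≥0∞} (hε : ε ≠ 0) :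
    ∃ (x : X) (r : ℝ), (0 < r ∧ r ≤ ρ) ∧ t ⊆ ball x r ∧ ENNReal.ofReal r ^ d ≤ ediam t ^ d + ε := by
  have htop : ediam t ≠ ∞ := ht.ne_top
  obtain ⟨r, hrd, htr, hrρ⟩ : ∃ r : ℝ, ENNReal.ofReal r ^ d < ediam t ^ d + ε ∧
      (ediam t).toReal < r ∧ r < ρ := by
    have hcont : Tendsto (fun r : ℝ => ENNReal.ofReal r ^ d) (𝓝[>] (ediam t).toReal)
        (𝓝 (ediam t ^ d)) := by
      have h := (ENNReal.continuous_rpow_const (y := d)).comp ENNReal.continuous_ofReal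
      simpa [Function.comp_def, ENNReal.ofReal_toReal htop] using
        (h.tendsto (ediam t).toReal).mono_left nhdsWithin_le_nhds
    have hlt : ediam t ^ d < ediam t ^ d + ε :=
      ENNReal.lt_add_right (ENNReal.rpow_ne_top_of_nonneg hd.le htop) hε
    exact ((hcont.eventually_lt_const hlt).and
      (Ioo_mem_nhdsGT ((ENNReal.lt_ofReal_iff_toReal_lt htop).1 ht))).exists
  have hr : 0 < r := ENNReal.toReal_nonneg.trans_lt htr
  obtain ⟨x, hx⟩ : ∃ x, t ⊆ ball x r := by
    rcases t.eq_empty_or_nonempty with rfl | ⟨x, hx⟩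
    · exact ⟨Classical.arbitrary X, Set.empty_subset _⟩
    · refine ⟨x, fun z hz => ?_⟩
      rw [mem_ball, dist_edist]
      exact (ENNReal.toReal_mono htop (edist_le_ediam_of_mem hz hx)).trans_lt htr
  exact ⟨x, r, ⟨hr, hrρ.le⟩, hx, hrd.le⟩

variable [MeasurableSpace X]

lemma exists_cover_tsum_diam_lt [BorelSpace X] {d : ℝ} (hd : 0 < d) {Z : Set X}
    (hZ : μH[d] Z = 0) {δ η : ℝ≥0∞} (hδ : 0 < δ) (hη : 0 < η) :
    ∃ t : ℕ → Set X, Z ⊆ ⋃ i, t i ∧ (∀ i, ediam (t i) ≤ δ) ∧ ∑' i, ediam (t i) ^ d < η := by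
  rw [Measure.hausdorffMeasure_apply] at hZ
  have h := (le_iSup₂ (f := fun (r : ℝ≥0∞) (_ : 0 < r) =>
    ⨅ (t : ℕ → Set X) (_ : Z ⊆ ⋃ n, t n) (_ : ∀ n, ediam (t n) ≤ r),
      ∑' n, ⨆ _ : (t n).Nonempty, ediam (t n) ^ d) δ hδ).trans_lt (hZ.trans_lt hη)
  simp only [iInf_lt_iff] at h
  obtain ⟨t, hZt, htδ, hsum⟩ := h
  refine ⟨t, hZt, htδ, (ENNReal.tsum_le_tsum fun i => ?_).trans_lt hsum⟩
  rcases (t i).eq_empty_or_nonempty with h | h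
  · simp [h, hd]
  · exact le_iSup (fun _ : (t i).Nonempty => ediam (t i) ^ d) h

lemma exists_ball_cover_tsum_le [BorelSpace X] [Nonempty X] {d : ℝ} (hd : 0 < d) {Z : Set X}
    (hZ : μH[d] Z = 0) {ρ : ℝ} (hρ : 0 < ρ) {η : ℝ≥0∞} (hη : η ≠ 0) :
    ∃ (x : ℕ → X) (r : ℕ → ℝ), (∀ i, 0 < r i ∧ r i ≤ ρ) ∧ Z ⊆ ⋃ i, ball (x i) (r i) ∧
      ∑' i, ENNReal.ofReal (r i) ^ d ≤ η := by
  have hη' : η / 2 ≠ 0 := (ENNReal.half_pos hη).ne'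
  obtain ⟨t, hZt, htρ, htη⟩ := exists_cover_tsum_diam_lt hd hZ
    (ENNReal.ofReal_pos.2 (half_pos hρ)) (ENNReal.half_pos hη)
  obtain ⟨ε, hε, hεη⟩ := ENNReal.exists_pos_sum_of_countable' hη' ℕ
  choose x r hr htr hrd using fun i => exists_ball_superset hd
    ((htρ i).trans_lt ((ENNReal.ofReal_lt_ofReal_iff hρ).2 (half_lt_self hρ))) (hε i).ne'
  refine ⟨x, r, hr, hZt.trans (Set.iUnion_mono htr), ?_⟩
  calc ∑' i, ENNReal.ofReal (r i) ^ d ≤ ∑' i, (ediam (t i) ^ d + ε i) := ENNReal.tsum_le_tsum hrd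
    _ = ∑' i, ediam (t i) ^ d + ∑' i, ε i := ENNReal.tsum_add
    _ ≤ η / 2 + η / 2 := add_le_add htη.le hεη.le
    _ = η := ENNReal.add_halves η

/-- The growth condition `σ (B(y, ρ)) ≤ K ρ ^ d` for balls of radius at most `ρ₀`, that is, the
upper half of `d`-regularity. The centers range over the whole space, not only the support of `σ`.
-/
def UpperRegular {X : Type*} [PseudoMetricSpace X] [MeasurableSpace X] (d : ℝ) (K : ℝ≥0∞) (ρ₀ : ℝ)
    (σ : Measure X) : Prop :=
  ∀ y, ∀ ρ, 0 < ρ → ρ ≤ ρ₀ → σ (ball y ρ) ≤ K * ENNReal.ofReal ρ ^ d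

lemma exists_isOpen_superset_forall_upperRegular_le [BorelSpace X] {d : ℝ} (hd : 0 < d)
    {Z : Set X} (hZ : μH[d] Z = 0) {K : ℝ≥0∞} (hK : K ≠ ∞) {ρ₀ : ℝ} (hρ₀ : 0 < ρ₀) {η : ℝ≥0∞}
    (hη : η ≠ 0) :
    ∃ V, IsOpen V ∧ Z ⊆ V ∧ ∀ σ : Measure X, UpperRegular d K ρ₀ σ → σ V ≤ η := by
  cases isEmpty_or_nonempty X
  · exact ⟨∅, isOpen_empty, fun z => isEmptyElim z, by simp⟩
  obtain ⟨x, r, hr, hZr, hsum⟩ := exists_ball_cover_tsum_le hd hZ hρ₀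
    (ENNReal.div_ne_zero.2 ⟨hη, hK⟩ : η / K ≠ 0)
  refine ⟨⋃ i, ball (x i) (r i), isOpen_iUnion fun i => isOpen_ball, hZr, fun σ hσ => ?_⟩
  calc σ (⋃ i, ball (x i) (r i)) ≤ ∑' i, σ (ball (x i) (r i)) := measure_iUnion_le _
    _ ≤ ∑' i, K * ENNReal.ofReal (r i) ^ d :=
      ENNReal.tsum_le_tsum fun i => hσ (x i) (r i) (hr i).1 (hr i).2
    _ = K * ∑' i, ENNReal.ofReal (r i) ^ d := ENNReal.tsum_mul_left
    _ ≤ K * (η / K) := by gcongr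
    _ ≤ η := ENNReal.mul_div_le

end Covers

section Compactness

lemma half_le_measureReal_of_compl_subset {X : Type*} [MeasurableSpace X] {σ : Measure X}
    [IsProbabilityMeasure σ] {s Q V : Set X}
    (hQ : σ Qᶜ = 0) (hV : σ V ≤ 1 / 2) (hs : sᶜ ⊆ Qᶜ ∪ V) : 1 / 2 ≤ σ.real s := by
  have hsV : σ sᶜ ≤ 1 / 2 := by
    calc σ sᶜ ≤ σ Qᶜ + σ V := (measure_mono hs).trans (measure_union_le _ _)
      _ ≤ 1 / 2 := by rwa [hQ, zero_add]
  have h1 : σ.real sᶜ ≤ 1 / 2 := by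
    simpa [Measure.real] using ENNReal.toReal_mono (by simp) hsV
  have h2 : 1 ≤ σ.real s + σ.real sᶜ := by
    simpa [Set.union_compl_self] using measureReal_union_le (μ := σ) s sᶜ
  linarith

variable {A X : Type*} [TopologicalSpace A] [TopologicalSpace X] [MeasurableSpace X]

lemma integrable_mul_of_compl_null [T2Space X] [OpensMeasurableSpace X]
    {σ : Measure X} {Q : Set X} (hQ : IsCompact Q) (hσQ : σ Qᶜ = 0) {f g : X → ℝ}
    (hf : Integrable f σ) (hg : Continuous g) : Integrable (fun x => f x * g x) σ := by
  have hσ : σ.restrict Q = σ := Measure.restrict_eq_self_of_ae_mem hσQ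
  rw [← hσ]
  exact hf.integrableOn.mul_continuousOn hg.continuousOn hQ

lemma integrable_of_continuous_of_compl_null [T2Space X] [OpensMeasurableSpace X]
    {σ : Measure X} [IsFiniteMeasure σ] {Q : Set X} (hQ : IsCompact Q) (hσQ : σ Qᶜ = 0)
    {g : X → ℝ} (hg : Continuous g) : Integrable g σ := by
  simpa using integrable_mul_of_compl_null hQ hσQ (integrable_const 1) hg

variable [T2Space X] [OpensMeasurableSpace X] {𝓜 : Set (Measure X)} {f : A → X → ℝ} {Q : Set X}

lemma exists_nhds_pos_le_integral (hQ : IsCompact Q)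
    (h𝓜 : ∀ σ ∈ 𝓜, IsProbabilityMeasure σ ∧ σ Qᶜ = 0) (hf : Continuous (Function.uncurry f))
    (hf₀ : ∀ a x, 0 ≤ f a x) {a : A} {V : Set X} (hVo : IsOpen V) (hV : {x | f a x = 0} ⊆ V)
    (hσV : ∀ σ ∈ 𝓜, σ V ≤ 1 / 2) :
    ∃ U ∈ 𝓝 a, ∃ c > 0, ∀ b ∈ U, ∀ σ ∈ 𝓜, c ≤ ∫ x, f b x ∂σ := by
  have hpos : ∀ x ∈ Q \ V, 0 < f a x := fun x hx =>
    (hf₀ a x).lt_of_ne' fun h => hx.2 (hV h)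
  have hQV : IsCompact (Q \ V) := hQ.diff hVo
  obtain ⟨δ, hδ, hδa⟩ : ∃ δ, 0 < δ ∧ ∀ x ∈ Q \ V, δ ≤ f a x :=
    hQV.exists_forall_le' (hf.uncurry_left a).continuousOn hpos
  have hU : ∀ᶠ b in 𝓝 a, ∀ x ∈ Q \ V, δ / 2 < f b x :=
    hQV.eventually_forall_of_forall_eventually fun x hx =>
      hf.continuousAt.eventually_const_lt ((half_lt_self hδ).trans_le (hδa x hx))
  refine ⟨_, hU, δ / 2 * (1 / 2), by positivity, fun b hb σ hσ => ?_⟩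
  obtain ⟨_, hσQ⟩ := h𝓜 σ hσ
  have hint : Integrable (f b) σ :=
    integrable_of_continuous_of_compl_null hQ hσQ (hf.uncurry_left b)
  have hlarge : {x | δ / 2 ≤ f b x}ᶜ ⊆ Qᶜ ∪ V := by
    intro x hx
    by_contra h
    rw [Set.mem_union, not_or, Set.notMem_compl_iff] at h
    exact hx (hb x h).le
  calc δ / 2 * (1 / 2) ≤ δ / 2 * σ.real {x | δ / 2 ≤ f b x} := by
        gcongr
        exact half_le_measureReal_of_compl_subset hσQ (hσV σ hσ) hlarge
    _ ≤ ∫ x, f b x ∂σ := mul_meas_ge_le_integral_of_nonneg (ae_of_all _ (hf₀ b)) hint _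

lemma exists_pos_forall_le_integral (hQ : IsCompact Q)
    (h𝓜 : ∀ σ ∈ 𝓜, IsProbabilityMeasure σ ∧ σ Qᶜ = 0) (hf : Continuous (Function.uncurry f))
    (hf₀ : ∀ a x, 0 ≤ f a x) {S : Set A} (hS : IsCompact S)
    (hV : ∀ a ∈ S, ∃ V, IsOpen V ∧ {x | f a x = 0} ⊆ V ∧ ∀ σ ∈ 𝓜, σ V ≤ 1 / 2) :
    ∃ c > 0, ∀ a ∈ S, ∀ σ ∈ 𝓜, c ≤ ∫ x, f a x ∂σ := by
  refine hS.induction_on (p := fun s => ∃ c > 0, ∀ a ∈ s, ∀ σ ∈ 𝓜, c ≤ ∫ x, f a x ∂σ)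
    ⟨1, one_pos, by simp⟩ ?_ ?_ ?_
  · rintro s t hst ⟨c, hc, h⟩
    exact ⟨c, hc, fun a ha => h a (hst ha)⟩
  · rintro s t ⟨c, hc, hs⟩ ⟨c', hc', ht⟩
    refine ⟨min c c', lt_min hc hc', ?_⟩
    rintro a (ha | ha) σ hσ
    · exact (min_le_left _ _).trans (hs a ha σ hσ)
    · exact (min_le_right _ _).trans (ht a ha σ hσ)
  · intro a ha
    obtain ⟨V, hVo, hZV, hσV⟩ := hV a ha
    obtain ⟨U, hU, hc⟩ := exists_nhds_pos_le_integral hQ h𝓜 hf hf₀ hVo hZV hσV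
    exact ⟨U, mem_nhdsWithin_of_mem_nhds hU, hc⟩

end Compactness

section CoefficientVectors

variable {ι R : Type*} [Finite ι] [CommSemiring R] {s : Finset (ι → ℕ)}

/-- The polynomial `∑ ν ∈ s, a ν X^ν` with coefficient vector `a`, as a linear map in `a`.
Multi-indices are plain functions, as in `multiIdx`. -/
noncomputable def ofCoeff (s : Finset (ι → ℕ)) : (s → R) →ₗ[R] MvPolynomial ι R :=
  ∑ ν : s, monomial (Finsupp.equivFunOnFinite.symm ν.1) ∘ₗ LinearMap.proj ν

lemma coeff_ofCoeff (a : s → R) (ν : s) :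
    coeff (Finsupp.equivFunOnFinite.symm ν.1) (ofCoeff s a) = a ν := by
  classical
  simp [ofCoeff, coeff_sum, coeff_monomial]

lemma coeff_ofCoeff_of_notMem (a : s → R) {m : ι →₀ ℕ} (hm : ⇑m ∉ s) :
    coeff m (ofCoeff s a) = 0 := by
  classical
  simp only [ofCoeff, LinearMap.sum_apply, LinearMap.comp_apply, coeff_sum, coeff_monomial]
  refine Finset.sum_eq_zero fun ν _ => if_neg ?_
  rintro rfl
  exact hm ν.2

lemma ofCoeff_injective : Function.Injective (ofCoeff (R := R) s) := by
  intro a b hab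
  ext ν
  rw [← coeff_ofCoeff a, hab, coeff_ofCoeff]

lemma mem_range_ofCoeff_iff {p : MvPolynomial ι R} :
    p ∈ LinearMap.range (ofCoeff s) ↔ ∀ m ∈ p.support, ⇑m ∈ s := by
  constructor
  · rintro ⟨a, rfl⟩ m hm
    by_contra h
    exact mem_support_iff.1 hm (coeff_ofCoeff_of_notMem a h)
  · intro h
    refine ⟨fun ν => coeff (Finsupp.equivFunOnFinite.symm ν.1) p, MvPolynomial.ext _ _ fun m => ?_⟩
    by_cases hm : ⇑m ∈ s
    · simpa using coeff_ofCoeff (fun ν => coeff (Finsupp.equivFunOnFinite.symm ν.1) p) ⟨⇑m, hm⟩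
    · rw [coeff_ofCoeff_of_notMem _ hm, notMem_support_iff.1 (mt (h m) hm)]

lemma eval_ofCoeff [Fintype ι] (a : s → R) (y : ι → R) :
    eval y (ofCoeff s a) = ∑ ν, a ν * ∏ i, y i ^ ν.1 i := by
  simp [ofCoeff, LinearMap.sum_apply, eval_monomial, Finsupp.prod_fintype]

lemma continuous_eval_ofCoeff [TopologicalSpace R] [IsTopologicalSemiring R] :
    Continuous fun z : (s → R) × (ι → R) => eval z.2 (ofCoeff s z.1) := by
  have := Fintype.ofFinite ι
  simp only [eval_ofCoeff]
  fun_prop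

variable [Fintype ι]

lemma abs_eval_ofCoeff_le (a : s → ℝ) {y : ι → ℝ} (hy : ‖y‖ ≤ 1) :
    |eval y (ofCoeff s a)| ≤ s.card * ‖a‖ := by
  have hterm : ∀ ν : s, |a ν * ∏ i, y i ^ ν.1 i| ≤ ‖a‖ := by
    intro ν
    have hprod : |∏ i, y i ^ ν.1 i| ≤ 1 := by
      simp only [Finset.abs_prod, abs_pow]
      exact Finset.prod_le_one (fun i _ => by positivity) fun i _ =>
        pow_le_one₀ (abs_nonneg _) ((norm_le_pi_norm y i).trans hy)
    rw [abs_mul]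
    exact (mul_le_of_le_one_right (abs_nonneg _) hprod).trans (norm_le_pi_norm a ν)
  calc |eval y (ofCoeff s a)| ≤ ∑ ν, |a ν * ∏ i, y i ^ ν.1 i| := by
        rw [eval_ofCoeff]
        exact Finset.abs_sum_le_sum_abs _ _
    _ ≤ s.card * ‖a‖ := by
        simpa using Finset.sum_le_card_nsmul Finset.univ _ ‖a‖ fun ν _ => hterm ν

end CoefficientVectors

section PolynomialFunctions

variable {n k : ℕ}

lemma mem_multiIdx {ν : Fin n → ℕ} : ν ∈ multiIdx n k ↔ ∑ i, ν i ≤ k := by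
  simp only [multiIdx, Finset.mem_filter, Fintype.mem_piFinset, Finset.mem_range,
    and_iff_right_iff_imp]
  intro h i
  exact Nat.lt_succ_of_le ((Finset.single_le_sum_of_canonicallyOrdered (Finset.mem_univ i)).trans h)

lemma mem_range_ofCoeff_multiIdx {R : Type*} [CommSemiring R] {p : MvPolynomial (Fin n) R} :
    p ∈ LinearMap.range (ofCoeff (multiIdx n k)) ↔ p.totalDegree ≤ k := by
  simp only [mem_range_ofCoeff_iff, mem_multiIdx, totalDegree, Finset.sup_le_iff,
    Finsupp.sum_fintype, implies_true]

lemma mem_degLE_iff {g : (Fin n → ℝ) → ℝ} :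
    g ∈ degLE n k ↔ ∃ a, ∀ y, g y = eval y (ofCoeff (multiIdx n k) a) := by
  constructor
  · rintro ⟨q, hq, hgq⟩
    obtain ⟨a, rfl⟩ := mem_range_ofCoeff_multiIdx.2 hq
    exact ⟨a, hgq⟩
  · rintro ⟨a, ha⟩
    exact ⟨_, mem_range_ofCoeff_multiIdx.1 ⟨a, rfl⟩, ha⟩

lemma totalDegree_bind₁_le {σ τ R : Type*} [CommSemiring R] {f : σ → MvPolynomial τ R}
    (hf : ∀ i, (f i).totalDegree ≤ 1) (p : MvPolynomial σ R) :
    (bind₁ f p).totalDegree ≤ p.totalDegree := by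
  conv_lhs => rw [p.as_sum, map_sum]
  refine totalDegree_finsetSum_le fun m hm => ?_
  rw [bind₁_monomial]
  calc (C (coeff m p) * ∏ i ∈ m.support, f i ^ m i).totalDegree
      ≤ (C (coeff m p)).totalDegree + (∏ i ∈ m.support, f i ^ m i).totalDegree :=
        totalDegree_mul _ _
    _ ≤ ∑ i ∈ m.support, (f i ^ m i).totalDegree := by
        rw [totalDegree_C, zero_add]
        exact totalDegree_finsetProd _ _
    _ ≤ ∑ i ∈ m.support, m i := Finset.sum_le_sum fun i _ =>
        (totalDegree_pow _ _).trans (mul_le_of_le_one_right' (hf i))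
    _ ≤ p.totalDegree := le_totalDegree hm

lemma degLE_comp_smul_add {g : (Fin n → ℝ) → ℝ} (hg : g ∈ degLE n k) (c : ℝ) (t : Fin n → ℝ) :
    (fun x => g (c • x + t)) ∈ degLE n k := by
  obtain ⟨q, hq, hgq⟩ := hg
  refine ⟨bind₁ (fun i => C c * X i + C (t i)) q, (totalDegree_bind₁_le (fun i => ?_) q).trans hq,
    fun x => ?_⟩
  · refine (totalDegree_add _ _).trans (max_le ((totalDegree_mul _ _).trans ?_) ?_) <;> simp
  · have haff : (fun i => aeval x (C c * X i + C (t i))) = c • x + t := by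
      ext i
      simp
    rw [← aeval_eq_eval, aeval_bind₁, haff, aeval_eq_eval, ← hgq]

end PolynomialFunctions

section Coercivity

variable {ι : Type*} [Fintype ι] {d : ℝ} {K : ℝ≥0∞} {ρ₀ : ℝ} {Q : Set (ι → ℝ)}

lemma exists_isOpen_superset_zeros_forall_upperRegular_le {p : MvPolynomial ι ℝ} (hp : p ≠ 0)
    (hd : (Fintype.card ι : ℝ) - 1 < d) (hK : K ≠ ∞) (hρ₀ : 0 < ρ₀) {η : ℝ≥0∞} (hη : η ≠ 0) :
    ∃ V, IsOpen V ∧ {y | eval y p = 0} ⊆ V ∧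
      ∀ σ : Measure (ι → ℝ), UpperRegular d K ρ₀ σ → σ V ≤ η := by
  cases isEmpty_or_nonempty ι
  · refine ⟨∅, isOpen_empty, fun y hy => hp (MvPolynomial.funext fun z => ?_), by simp⟩
    rw [map_zero, Subsingleton.elim z y]
    exact hy
  · have hcard : (1 : ℝ) ≤ Fintype.card ι := by exact_mod_cast Fintype.card_pos
    exact exists_isOpen_superset_forall_upperRegular_le (by linarith)
      (hausdorffMeasure_eval_eq_zero hp hd) hK hρ₀ hη

/-- The class of normalized measures over which the compactness argument is uniform: probability
measures carried by `Q` that satisfy the growth condition `UpperRegular d K ρ₀`. -/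
structure IsNormalizedRegular {X : Type*} [PseudoMetricSpace X] [MeasurableSpace X] (d : ℝ)
    (K : ℝ≥0∞) (ρ₀ : ℝ) (Q : Set X) (σ : Measure X) : Prop where
  isProbabilityMeasure : IsProbabilityMeasure σ
  compl_null : σ Qᶜ = 0
  upperRegular : UpperRegular d K ρ₀ σ

lemma exists_pos_forall_mul_norm_sq_le_integral (hd : (Fintype.card ι : ℝ) - 1 < d) (hK : K ≠ ∞)
    (hρ₀ : 0 < ρ₀) (hQ : IsCompact Q) (s : Finset (ι → ℕ)) :
    ∃ c > 0, ∀ σ, IsNormalizedRegular d K ρ₀ Q σ → ∀ a : s → ℝ,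
      c * ‖a‖ ^ 2 ≤ ∫ y, eval y (ofCoeff s a) ^ 2 ∂σ := by
  obtain ⟨c, hc, hsphere⟩ := exists_pos_forall_le_integral hQ
    (𝓜 := {σ | IsNormalizedRegular d K ρ₀ Q σ})
    (fun σ hσ => ⟨hσ.isProbabilityMeasure, hσ.compl_null⟩)
    (continuous_eval_ofCoeff.pow 2) (fun _ _ => sq_nonneg _) (isCompact_sphere (0 : s → ℝ) 1)
    (fun a ha => by
      have ha₀ : ofCoeff s a ≠ 0 := (map_ne_zero_iff _ ofCoeff_injective).2
        (ne_zero_of_mem_unit_sphere ⟨a, ha⟩)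
      obtain ⟨V, hVo, hZV, hσV⟩ :=
        exists_isOpen_superset_zeros_forall_upperRegular_le ha₀ hd hK hρ₀ (η := 1 / 2) (by simp)
      exact ⟨V, hVo, fun y hy => hZV (pow_eq_zero_iff two_ne_zero |>.1 hy),
        fun σ hσ => hσV σ hσ.upperRegular⟩)
  refine ⟨c, hc, fun σ hσ a => ?_⟩
  rcases eq_or_ne a 0 with rfl | ha
  · simp
  have hunit := hsphere (‖a‖⁻¹ • a) (by simp [norm_smul, ha]) σ hσ
  simp only [map_smul, smul_eval, mul_pow, integral_const_mul] at hunit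
  rwa [inv_pow, ← div_eq_inv_mul, le_div_iff₀ (by positivity)] at hunit

end Coercivity

section DualBasis

lemma exists_dual_vector_of_coercive {V : Type*} [NormedAddCommGroup V] [NormedSpace ℝ V]
    [FiniteDimensional ℝ V] {B : LinearMap.BilinForm ℝ V} {c : ℝ} (hc : 0 < c)
    (hB : ∀ v, c * ‖v‖ ^ 2 ≤ B v v) (φ : StrongDual ℝ V) :
    ∃ b, ‖b‖ ≤ c⁻¹ * ‖φ‖ ∧ ∀ v, B v b = φ v := by
  have hinj : Function.Injective B.flip := by
    refine (injective_iff_map_eq_zero B.flip).2 fun b hb => ?_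
    have hbb : B b b = 0 := DFunLike.congr_fun hb b
    have hle := hB b
    rw [hbb] at hle
    by_contra hb₀
    exact hle.not_gt (by positivity)
  obtain ⟨b, hb⟩ := (LinearMap.injective_iff_surjective_of_finrank_eq_finrank
    (Subspace.dual_finrank_eq (K := ℝ) (V := V)).symm).1 hinj φ.toLinearMap
  have hφ : ∀ v, B v b = φ v := fun v => DFunLike.congr_fun hb v
  refine ⟨b, ?_, hφ⟩
  rcases eq_or_ne b 0 with rfl | hb₀
  · rw [norm_zero]
    positivity
  have hbound : c * ‖b‖ ^ 2 ≤ ‖φ‖ * ‖b‖ := by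
    calc c * ‖b‖ ^ 2 ≤ φ b := (hB b).trans_eq (hφ b)
      _ ≤ ‖φ‖ * ‖b‖ := (le_abs_self _).trans (φ.le_opNorm b)
  rw [← div_eq_inv_mul, le_div_iff₀' hc]
  exact le_of_mul_le_mul_right (by linarith) (norm_pos_iff.2 hb₀)

variable {ι : Type*} [Finite ι] {s : Finset (ι → ℕ)}

lemma integrable_eval {Q : Set (ι → ℝ)} (hQ : IsCompact Q) {σ : Measure (ι → ℝ)}
    [IsFiniteMeasure σ] (hσQ : σ Qᶜ = 0) (p : MvPolynomial ι ℝ) :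
    Integrable (fun y => eval y p) σ :=
  integrable_of_continuous_of_compl_null hQ hσQ p.continuous_eval

lemma exists_dual_family_of_coercive {Q : Set (ι → ℝ)} (hQ : IsCompact Q) {σ : Measure (ι → ℝ)}
    [IsFiniteMeasure σ] (hσQ : σ Qᶜ = 0) {c : ℝ} (hc : 0 < c)
    (hcoer : ∀ a : s → ℝ, c * ‖a‖ ^ 2 ≤ ∫ y, eval y (ofCoeff s a) ^ 2 ∂σ) (ν : s) :
    ∃ b : s → ℝ, ‖b‖ ≤ c⁻¹ ∧
      ∀ a, ∫ y, eval y (ofCoeff s a) * eval y (ofCoeff s b) ∂σ = a ν := by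
  have hint := integrable_eval hQ hσQ
  let I : MvPolynomial ι ℝ →ₗ[ℝ] ℝ :=
    { toFun := fun p => ∫ y, eval y p ∂σ
      map_add' := fun p q => by simpa using integral_add (hint p) (hint q)
      map_smul' := fun t p => by simp [integral_const_mul] }
  let B : LinearMap.BilinForm ℝ (s → ℝ) :=
    ((LinearMap.mul ℝ (MvPolynomial ι ℝ)).compr₂ I).compl₁₂ (ofCoeff s) (ofCoeff s)
  have hB : ∀ a b, B a b = ∫ y, eval y (ofCoeff s a) * eval y (ofCoeff s b) ∂σ := by
    intro a b
    simp [B, I]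
  obtain ⟨b, hb, hdual⟩ := exists_dual_vector_of_coercive (B := B) hc
    (fun a => by simpa only [hB, ← sq] using hcoer a) (ContinuousLinearMap.proj ν)
  refine ⟨b, hb.trans (mul_le_of_le_one_right (inv_nonneg.2 hc.le) ?_), fun a => ?_⟩
  · exact ContinuousLinearMap.opNorm_le_bound _ zero_le_one fun a => by
      simpa using norm_le_pi_norm a ν
  · rw [← hB]
    exact hdual a

lemma exists_uniform_dual_family {ι : Type*} [Fintype ι] {d : ℝ}
    (hd : (Fintype.card ι : ℝ) - 1 < d) {K : ℝ≥0∞} (hK : K ≠ ∞) {ρ₀ : ℝ} (hρ₀ : 0 < ρ₀)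
    (s : Finset (ι → ℕ)) :
    ∃ C, ∀ σ, IsNormalizedRegular d K ρ₀ (closedBall (0 : ι → ℝ) 1) σ →
      ∃ b : s → (s → ℝ), (∀ ν, ∀ y, ‖y‖ ≤ 1 → |eval y (ofCoeff s (b ν))| ≤ C) ∧
        ∀ ν a, ∫ y, eval y (ofCoeff s a) * eval y (ofCoeff s (b ν)) ∂σ = a ν := by
  have hQ : IsCompact (closedBall (0 : ι → ℝ) 1) := isCompact_closedBall _ _
  obtain ⟨c, hc, hcoer⟩ := exists_pos_forall_mul_norm_sq_le_integral hd hK hρ₀ hQ s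
  refine ⟨s.card * c⁻¹, fun σ hσ => ?_⟩
  have := hσ.isProbabilityMeasure
  choose b hb hdual using exists_dual_family_of_coercive hQ hσ.compl_null hc (hcoer σ hσ)
  refine ⟨b, fun ν y hy => (abs_eval_ofCoeff_le _ hy).trans ?_, hdual⟩
  gcongr
  exact hb ν

end DualBasis

section DSets

variable {X : Type*} [PseudoMetricSpace X] [MeasurableSpace X] {μ : Measure X} {d : ℝ}
  {c₁ c₂ : ℝ≥0∞} {S : Set X}

/-- `S` is a `d`-set for `μ`: at scales at most `1`, balls centered in `S` meet `S` in mass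
comparable to `ρ ^ d`. The classical notion is the case `μ = μH[d]`. -/
def IsDSet (μ : Measure X) (d : ℝ) (c₁ c₂ : ℝ≥0∞) (S : Set X) : Prop :=
  ∀ w ∈ S, ∀ ρ : ℝ, 0 < ρ → ρ ≤ 1 →
    c₁ * ENNReal.ofReal ρ ^ d ≤ μ (closedBall w ρ ∩ S) ∧
      μ (closedBall w ρ ∩ S) ≤ c₂ * ENNReal.ofReal ρ ^ d

lemma ofReal_rpow_ne_zero {ρ : ℝ} (hρ : 0 < ρ) (d : ℝ) : ENNReal.ofReal ρ ^ d ≠ 0 :=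
  (ENNReal.rpow_pos (ENNReal.ofReal_pos.2 hρ) ENNReal.ofReal_ne_top).ne'

lemma ofReal_rpow_ne_top {ρ : ℝ} (hρ : 0 < ρ) (d : ℝ) : ENNReal.ofReal ρ ^ d ≠ ∞ :=
  ENNReal.rpow_ne_top_of_ne_zero (ENNReal.ofReal_pos.2 hρ).ne' ENNReal.ofReal_ne_top

namespace IsDSet

lemma mul_rpow_le_measure (hS : IsDSet μ d c₁ c₂ S) {w : X} (hw : w ∈ S) {ρ r : ℝ} (hρ : 0 < ρ)
    (hρ1 : ρ ≤ 1) (hρr : ρ ≤ r) : c₁ * ENNReal.ofReal ρ ^ d ≤ μ (closedBall w r ∩ S) :=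
  (hS w hw ρ hρ hρ1).1.trans
    (measure_mono (Set.inter_subset_inter_left S (closedBall_subset_closedBall hρr)))

lemma measure_ne_zero (hS : IsDSet μ d c₁ c₂ S) (hc₁ : 0 < c₁) {w : X} (hw : w ∈ S) {r : ℝ}
    (hr : 0 < r) : μ (closedBall w r ∩ S) ≠ 0 := by
  have hρ : 0 < min 1 r := lt_min one_pos hr
  exact ((ENNReal.mul_pos hc₁.ne' (ofReal_rpow_ne_zero hρ d)).trans_le
    (hS.mul_rpow_le_measure hw hρ (min_le_left _ _) (min_le_right _ _))).ne'

lemma measure_lt_top (hS : IsDSet μ d c₁ c₂ S) (hc₂ : c₂ ≠ ∞) {A : Set X} (hAS : A ⊆ S)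
    (hA : TotallyBounded A) : μ A < ∞ := by
  obtain ⟨t, htA, ht, hAt⟩ := finite_approx_of_totallyBounded hA 1 one_pos
  have hcover : A ⊆ ⋃ x ∈ t, closedBall x 1 ∩ S := by
    intro y hy
    obtain ⟨x, hx, hyx⟩ := Set.mem_iUnion₂.1 (hAt hy)
    exact Set.mem_iUnion₂.2 ⟨x, hx, ball_subset_closedBall hyx, hAS hy⟩
  refine (measure_mono hcover).trans_lt ((measure_biUnion_lt_top ht) fun x hx => ?_)
  calc μ (closedBall x 1 ∩ S) ≤ c₂ * ENNReal.ofReal 1 ^ d :=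
        (hS x (hAS (htA hx)) 1 one_pos le_rfl).2
    _ < ∞ := by simpa using hc₂.lt_top

lemma measure_closedBall_inter_lt_top [ProperSpace X] (hS : IsDSet μ d c₁ c₂ S) (hc₂ : c₂ ≠ ∞)
    (w : X) (r : ℝ) : μ (closedBall w r ∩ S) < ∞ :=
  hS.measure_lt_top hc₂ Set.inter_subset_right
    ((isCompact_closedBall w r).totallyBounded.subset Set.inter_subset_left)

end IsDSet

end DSets

section Normalization

variable {E : Type*} [NormedAddCommGroup E] [NormedSpace ℝ E] {w x y : E} {r : ℝ}

/-- The affine coordinate `(x - w) / (2 r)` that normalizes a cube with center `w` and side length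
`2 r`. -/
noncomputable def cubeCoord (w : E) (r : ℝ) (x : E) : E := (2 * r)⁻¹ • (x - w)

lemma continuous_cubeCoord : Continuous (cubeCoord w r) := by
  unfold cubeCoord
  fun_prop

lemma smul_cubeCoord_add (hr : r ≠ 0) : (2 * r) • cubeCoord w r x + w = x := by
  rw [cubeCoord, smul_inv_smul₀ (by positivity), sub_add_cancel]

lemma dist_eq_mul_dist_cubeCoord (hr : 0 < r) :
    dist x y = 2 * r * dist (cubeCoord w r x) (cubeCoord w r y) := by
  rw [cubeCoord, cubeCoord, dist_smul₀, dist_sub_right, Real.norm_of_nonneg (by positivity),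
    mul_inv_cancel_left₀ (by positivity)]

lemma norm_cubeCoord_le_one (hr : 0 < r) (hx : x ∈ closedBall w r) : ‖cubeCoord w r x‖ ≤ 1 := by
  have hxw : ‖x - w‖ ≤ r := mem_closedBall_iff_norm.1 hx
  rw [cubeCoord, norm_smul, norm_inv, Real.norm_of_nonneg (by positivity),
    inv_mul_le_one₀ (by positivity)]
  linarith

variable [MeasurableSpace E] {μ : Measure E} {d : ℝ} {c₁ c₂ : ℝ≥0∞} {S : Set E}

lemma IsDSet.measure_inter_preimage_ball_le (hS : IsDSet μ d c₁ c₂ S) {ρ : ℝ} (hr : 0 < r)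
    (hρ : 0 < ρ) (hrρ : 4 * r * ρ ≤ 1) :
    μ (closedBall w r ∩ S ∩ cubeCoord w r ⁻¹' ball y ρ) ≤ c₂ * ENNReal.ofReal (4 * r * ρ) ^ d := by
  rcases (closedBall w r ∩ S ∩ cubeCoord w r ⁻¹' ball y ρ).eq_empty_or_nonempty with
    h | ⟨z, hz, hzy⟩
  · simp [h]
  refine (measure_mono fun x hx => ?_).trans (hS z hz.2 (4 * r * ρ) (by positivity) hrρ).2
  have hxz : dist (cubeCoord w r x) (cubeCoord w r z) ≤ 2 * ρ := by
    have hx' : dist (cubeCoord w r x) y < ρ := hx.2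
    have hz' : dist (cubeCoord w r z) y < ρ := hzy
    linarith [dist_triangle_right (cubeCoord w r x) (cubeCoord w r z) y]
  refine ⟨?_, hx.1.2⟩
  calc dist x z = 2 * r * dist (cubeCoord w r x) (cubeCoord w r z) := dist_eq_mul_dist_cubeCoord hr
    _ ≤ 2 * r * (2 * ρ) := by gcongr
    _ = 4 * r * ρ := by ring

/-- The normalized restriction of `μ` to `closedBall w r ∩ S`, transported to the unit scale. -/
noncomputable def cubeMeasure (μ : Measure E) (S : Set E) (w : E) (r : ℝ) : Measure E :=
  (ProbabilityTheory.cond μ (closedBall w r ∩ S)).map (cubeCoord w r)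

variable [BorelSpace E]

lemma cubeMeasure_apply {s : Set E} (hs : MeasurableSet s) :
    cubeMeasure μ S w r s =
      (μ (closedBall w r ∩ S))⁻¹ * μ (closedBall w r ∩ S ∩ cubeCoord w r ⁻¹' s) := by
  rw [cubeMeasure, Measure.map_apply continuous_cubeCoord.measurable hs,
    ProbabilityTheory.cond_apply' (continuous_cubeCoord.measurable hs)]

lemma integral_cubeMeasure [SecondCountableTopology E] {φ : E → ℝ} (hφ : Continuous φ) :
    ∫ y, φ y ∂cubeMeasure μ S w r =
      (μ (closedBall w r ∩ S)).toReal⁻¹ * ∫ x in closedBall w r ∩ S, φ (cubeCoord w r x) ∂μ := by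
  rw [cubeMeasure, integral_map continuous_cubeCoord.aemeasurable hφ.aestronglyMeasurable,
    ProbabilityTheory.cond, integral_smul_measure, ENNReal.toReal_inv, smul_eq_mul]

lemma cubeMeasure_compl_closedBall (hr : 0 < r) : cubeMeasure μ S w r (closedBall 0 1)ᶜ = 0 := by
  have hempty : closedBall w r ∩ S ∩ cubeCoord w r ⁻¹' (closedBall 0 1)ᶜ = ∅ := by
    refine Set.eq_empty_of_forall_notMem fun x hx => hx.2 ?_
    exact mem_closedBall_zero_iff.2 (norm_cubeCoord_le_one hr hx.1.1)
  rw [cubeMeasure_apply measurableSet_closedBall.compl, hempty, measure_empty, mul_zero]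

lemma IsDSet.upperRegular_cubeMeasure (hS : IsDSet μ d c₁ c₂ S) (hw : w ∈ S) (hr : 0 < r) {L : ℝ}
    (hL : 4 ≤ L) (hrL : 4 * r ≤ L) :
    UpperRegular d (c₂ / c₁ * ENNReal.ofReal L ^ d) L⁻¹ (cubeMeasure μ S w r) := by
  intro y ρ hρ hρL
  have hL₀ : 0 < L := by linarith
  have hρ1 : L * ρ ≤ 1 := (le_inv_mul_iff₀ hL₀).1 (by simpa using hρL)
  set t := 4 * r / L
  have ht : 0 < t := by positivity
  have hlow : c₁ * ENNReal.ofReal t ^ d ≤ μ (closedBall w r ∩ S) := by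
    refine hS.mul_rpow_le_measure hw ht ((div_le_one₀ hL₀).2 hrL) ((div_le_iff₀ hL₀).2 ?_)
    nlinarith
  have hscale : 4 * r * ρ = t * (L * ρ) := by
    simp only [t]
    field_simp
  have hup := hS.measure_inter_preimage_ball_le (w := w) (y := y) hr hρ (hscale.trans_le
    (mul_le_one₀ ((div_le_one₀ hL₀).2 hrL) (by positivity) hρ1))
  rw [hscale, ENNReal.ofReal_mul ht.le, ENNReal.ofReal_mul hL₀.le, ENNReal.mul_rpow_of_ne_top
    ENNReal.ofReal_ne_top (by finiteness), ENNReal.mul_rpow_of_ne_top (by finiteness)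
    (by finiteness)] at hup
  have hτ₀ := ofReal_rpow_ne_zero ht d
  have hτ := ofReal_rpow_ne_top ht d
  rw [cubeMeasure_apply measurableSet_ball]
  generalize ENNReal.ofReal t ^ d = τ at *
  calc _ ≤ (c₁ * τ)⁻¹ * (c₂ * (τ * (ENNReal.ofReal L ^ d * ENNReal.ofReal ρ ^ d))) := by
        gcongr
    _ = c₂ / c₁ * ENNReal.ofReal L ^ d * ENNReal.ofReal ρ ^ d * (τ⁻¹ * τ) := by
        rw [ENNReal.mul_inv (.inr hτ) (.inr hτ₀), div_eq_mul_inv]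
        ring
    _ = c₂ / c₁ * ENNReal.ofReal L ^ d * ENNReal.ofReal ρ ^ d := by
        rw [ENNReal.inv_mul_cancel hτ₀ hτ, mul_one]

lemma IsDSet.isNormalizedRegular_cubeMeasure [ProperSpace E] (hS : IsDSet μ d c₁ c₂ S)
    (hc₁ : 0 < c₁) (hc₂ : c₂ ≠ ∞) (hw : w ∈ S) (hr : 0 < r) {L : ℝ} (hL : 4 ≤ L)
    (hrL : 4 * r ≤ L) :
    IsNormalizedRegular d (c₂ / c₁ * ENNReal.ofReal L ^ d) L⁻¹ (closedBall 0 1)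
      (cubeMeasure μ S w r) where
  isProbabilityMeasure := by
    have := ProbabilityTheory.cond_isProbabilityMeasure_of_finite (hS.measure_ne_zero hc₁ hw hr)
      (hS.measure_closedBall_inter_lt_top hc₂ w r).ne
    exact Measure.isProbabilityMeasure_map continuous_cubeCoord.aemeasurable
  compl_null := cubeMeasure_compl_closedBall hr
  upperRegular := hS.upperRegular_cubeMeasure hw hr hL hrL

end Normalization

section Projection

lemma integral_mul_eq_of_orthogonal {X : Type*} [TopologicalSpace X] [T2Space X]
    [MeasurableSpace X] [OpensMeasurableSpace X] {σ : Measure X} [IsFiniteMeasure σ] {Q : Set X}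
    (hQ : IsCompact Q) (hσQ : σ Qᶜ = 0) {f p g : X → ℝ} (hf : Integrable f σ) (hp : Continuous p)
    (hg : Continuous g) (h : ∫ x, (f x - p x) * g x ∂σ = 0) :
    ∫ x, f x * g x ∂σ = ∫ x, p x * g x ∂σ := by
  have hfg := integrable_mul_of_compl_null hQ hσQ hf hg
  have hpg : Integrable (fun x => p x * g x) σ :=
    integrable_of_continuous_of_compl_null hQ hσQ (hp.mul hg)
  rw [← sub_eq_zero, ← integral_sub hfg hpg]
  simpa only [sub_mul] using h

lemma inv_measure_mul_setIntegral_eq_integral_cubeMeasure {E : Type*} [NormedAddCommGroup E]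
    [NormedSpace ℝ E] [ProperSpace E] [MeasurableSpace E] [BorelSpace E] {μ : Measure E} {S : Set E}
    {w : E} {r : ℝ} (hμ : μ (closedBall w r ∩ S) < ∞) {f : E → ℝ}
    (hf : Integrable f (μ.restrict (closedBall w r ∩ S))) {φ ψ : E → ℝ} (hφ : Continuous φ)
    (hψ : Continuous ψ)
    (h : ∫ x in closedBall w r ∩ S, (f x - φ (cubeCoord w r x)) * ψ (cubeCoord w r x) ∂μ = 0) :
    (μ (closedBall w r ∩ S)).toReal⁻¹ *
        ∫ x in closedBall w r ∩ S, f x * ψ (cubeCoord w r x) ∂μ =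
      ∫ y, φ y * ψ y ∂cubeMeasure μ S w r := by
  have : IsFiniteMeasure (μ.restrict (closedBall w r ∩ S)) := ⟨by rwa [Measure.restrict_apply_univ]⟩
  have hnull : μ.restrict (closedBall w r ∩ S) (closedBall w r)ᶜ = 0 := by
    rw [Measure.restrict_apply measurableSet_closedBall.compl, ← Set.inter_assoc,
      Set.compl_inter_self, Set.empty_inter, measure_empty]
  rw [integral_cubeMeasure (φ := fun y => φ y * ψ y) (hφ.mul hψ)]
  congr 1
  exact integral_mul_eq_of_orthogonal (isCompact_closedBall w r) hnull hf
    (hφ.comp continuous_cubeCoord) (hψ.comp continuous_cubeCoord) h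

lemma mem_degLE_iff_cubeCoord {n k : ℕ} {w : Fin n → ℝ} {r : ℝ} (hr : r ≠ 0)
    {g : (Fin n → ℝ) → ℝ} :
    g ∈ degLE n k ↔ ∃ a, ∀ x, g x = eval (cubeCoord w r x) (ofCoeff (multiIdx n k) a) := by
  constructor
  · intro hg
    obtain ⟨a, ha⟩ := mem_degLE_iff.1 (degLE_comp_smul_add hg (2 * r) w)
    exact ⟨a, fun x => by rw [← ha, smul_cubeCoord_add hr]⟩
  · rintro ⟨a, ha⟩
    have hmem := degLE_comp_smul_add (mem_degLE_iff.2 ⟨a, fun _ => rfl⟩) (2 * r)⁻¹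
      (-((2 * r)⁻¹ • w))
    convert hmem using 2 with x
    rw [ha, cubeCoord, smul_sub, sub_eq_add_neg]

variable {ι : Type*} [Fintype ι] {w : ι → ℝ} {r : ℝ} {s : Finset (ι → ℕ)}

lemma eval_cubeCoord_ofCoeff (a : s → ℝ) (x : ι → ℝ) :
    eval (cubeCoord w r x) (ofCoeff s a) =
      ∑ ν, a ν * (∏ i, (x i - w i) ^ ν.1 i) / (2 * r) ^ ∑ i, ν.1 i := by
  simp only [eval_ofCoeff, cubeCoord, Pi.smul_apply, Pi.sub_apply, smul_eq_mul, mul_pow, inv_pow,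
    Finset.prod_mul_distrib, Finset.prod_inv_distrib, Finset.prod_pow_eq_pow_sum]
  exact Finset.sum_congr rfl fun ν _ => by ring

lemma eval_cubeCoord_ofCoeff_eq_sum_of_dual_family {μ : Measure (ι → ℝ)} {S : Set (ι → ℝ)}
    (hμ : μ (closedBall w r ∩ S) < ∞) {b : s → (s → ℝ)}
    (hb : ∀ ν a, ∫ y, eval y (ofCoeff s a) * eval y (ofCoeff s (b ν)) ∂cubeMeasure μ S w r = a ν)
    {f : (ι → ℝ) → ℝ} (hf : Integrable f (μ.restrict (closedBall w r ∩ S))) {a : s → ℝ}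
    (horth : ∀ ν, ∫ x in closedBall w r ∩ S, (f x - eval (cubeCoord w r x) (ofCoeff s a)) *
      eval (cubeCoord w r x) (ofCoeff s (b ν)) ∂μ = 0) (x : ι → ℝ) :
    eval (cubeCoord w r x) (ofCoeff s a) = ∑ ν,
      ((μ (closedBall w r ∩ S)).toReal⁻¹ *
          ∫ z in closedBall w r ∩ S, f z * eval (cubeCoord w r z) (ofCoeff s (b ν)) ∂μ) *
        (∏ i, (x i - w i) ^ ν.1 i) / (2 * r) ^ ∑ i, ν.1 i := by
  have hcoeff : ∀ ν, (μ (closedBall w r ∩ S)).toReal⁻¹ *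
      ∫ z in closedBall w r ∩ S, f z * eval (cubeCoord w r z) (ofCoeff s (b ν)) ∂μ = a ν :=
    fun ν => (inv_measure_mul_setIntegral_eq_integral_cubeMeasure hμ hf
      (continuous_eval (ofCoeff s a)) (continuous_eval (ofCoeff s (b ν))) (horth ν)).trans (hb ν a)
  simp only [hcoeff]
  exact eval_cubeCoord_ofCoeff a x

end Projection

theorem stmt_15_general (n : ℕ) (d : ℝ) (hd : (n : ℝ) - 1 < d) (μ : Measure (Fin n → ℝ))
    (S : Set (Fin n → ℝ)) (c₁ c₂ : ℝ≥0∞) (hc₁ : 0 < c₁) (hc₂ : c₂ ≠ ∞) (hS : IsDSet μ d c₁ c₂ S)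
    (R : ℝ) (k : ℕ) :
    ∃ C : ℝ, ∀ (w : Fin n → ℝ) (r : ℝ), w ∈ S → 0 < r → 2 * r ≤ R →
      ∃ h : (Fin n → ℕ) → ((Fin n → ℝ) → ℝ),
        (∀ ν ∈ multiIdx n k, h ν ∈ degLE n k) ∧
        (∀ ν ∈ multiIdx n k, ∀ x ∈ closedBall w r, |h ν x| ≤ C) ∧
        ∀ f : (Fin n → ℝ) → ℝ, Integrable f (μ.restrict (closedBall w r ∩ S)) →
          ∀ Pf ∈ degLE n k,
            (∀ g ∈ degLE n k, ∫ x in closedBall w r ∩ S, (f x - Pf x) * g x ∂μ = 0) →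
            ∀ x, Pf x = ∑ ν ∈ multiIdx n k,
              ((μ (closedBall w r ∩ S)).toReal⁻¹ *
                  ∫ z in closedBall w r ∩ S, f z * h ν z ∂μ) *
                (∏ i, (x i - w i) ^ ν i) / (2 * r) ^ (∑ i, ν i) := by
  obtain ⟨L, hL, hRL⟩ : ∃ L, 4 ≤ L ∧ 2 * R ≤ L := ⟨_, le_max_left _ _, le_max_right _ _⟩
  have hL₀ : 0 < L := by linarith
  obtain ⟨C, hC⟩ := exists_uniform_dual_family (by simpa using hd)
    (ENNReal.mul_ne_top (ENNReal.div_ne_top hc₂ hc₁.ne') (ofReal_rpow_ne_top hL₀ d))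
    (inv_pos.2 hL₀) (multiIdx n k)
  refine ⟨C, fun w r hw hr hrR => ?_⟩
  obtain ⟨b, hbC, hdual⟩ :=
    hC _ (hS.isNormalizedRegular_cubeMeasure hc₁ hc₂ hw hr hL (by linarith))
  obtain ⟨h, hh⟩ : ∃ h : (Fin n → ℕ) → ((Fin n → ℝ) → ℝ), ∀ ν : multiIdx n k,
      h ν = fun x => eval (cubeCoord w r x) (ofCoeff (multiIdx n k) (b ν)) :=
    ⟨Function.extend Subtype.val _ 0, Subtype.val_injective.extend_apply _ _⟩
  have hdeg : ∀ ν : multiIdx n k, h ν ∈ degLE n k := fun ν =>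
    (mem_degLE_iff_cubeCoord hr.ne').2 ⟨b ν, fun x => by rw [hh]⟩
  refine ⟨h, fun ν hν => hdeg ⟨ν, hν⟩, fun ν hν x hx => ?_, fun f hf Pf hPf horth x => ?_⟩
  · rw [hh ⟨ν, hν⟩]
    exact hbC _ _ (norm_cubeCoord_le_one hr hx)
  · obtain ⟨a, ha⟩ := (mem_degLE_iff_cubeCoord hr.ne').1 hPf
    have hsum := eval_cubeCoord_ofCoeff_eq_sum_of_dual_family
      (hS.measure_closedBall_inter_lt_top hc₂ w r) hdual hf
      (fun ν => by simpa only [ha, hh] using horth _ (hdeg ν)) x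
    rw [ha, hsum, ← Finset.sum_coe_sort (multiIdx n k)]
    simp only [hh]

/-- Representation formula for the orthogonal projection `P_{k,Q}` onto `P_k` on a `d`-set,
`n - 1 < d ≤ n`: there are polynomials `h_{Q,ν} ∈ P_k` with `‖h_{Q,ν}‖_{L^∞(Q)} ≤ C(S,R,n,k)`
such that for every `f ∈ L¹(Q∩S)`,
`P_{k,Q} f(x) = ∑_{|ν| ≤ k} ((1/H^d(Q∩S)) ∫_{Q∩S} f h_{Q,ν} dH^d) (x-x_Q)^ν / ℓ(Q)^{|ν|}`,
where `P_{k,Q} f` is characterized by being in `P_k` and orthogonal to `P_k` differences. -/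
theorem stmt_15 (n : ℕ) (d : ℝ) (hd1 : (n : ℝ) - 1 < d) (hdn : d ≤ n)
    (S : Set (Fin n → ℝ)) (hScl : IsClosed S)
    (c₁ c₂ : ℝ≥0∞) (hc₁ : 0 < c₁) (hc₂ : c₂ ≠ ∞)
    (hreg : ∀ w ∈ S, ∀ ρ : ℝ, 0 < ρ → ρ ≤ 1 →
      c₁ * ENNReal.ofReal ρ ^ d ≤ μH[d] (closedBall w ρ ∩ S) ∧
        μH[d] (closedBall w ρ ∩ S) ≤ c₂ * ENNReal.ofReal ρ ^ d)
    (R : ℝ) (hR : 0 < R) (k : ℕ) :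
    ∃ C : ℝ, ∀ (w : Fin n → ℝ) (r₀ : ℝ), w ∈ S → 0 < r₀ → 2 * r₀ ≤ R →
      ∃ h : (Fin n → ℕ) → ((Fin n → ℝ) → ℝ),
        (∀ ν ∈ multiIdx n k, h ν ∈ degLE n k) ∧
        (∀ ν ∈ multiIdx n k, ∀ x ∈ closedBall w r₀, |h ν x| ≤ C) ∧
        ∀ f : (Fin n → ℝ) → ℝ,
          Integrable f (μH[d].restrict (closedBall w r₀ ∩ S)) →
          ∀ Pf ∈ degLE n k,
            (∀ g ∈ degLE n k,
              ∫ x in closedBall w r₀ ∩ S, (f x - Pf x) * g x ∂μH[d] = 0) →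
            ∀ x, Pf x = ∑ ν ∈ multiIdx n k,
              ((μH[d] (closedBall w r₀ ∩ S)).toReal⁻¹ *
                  ∫ z in closedBall w r₀ ∩ S, f z * h ν z ∂μH[d]) *
                (∏ i, (x i - w i) ^ ν i) / (2 * r₀) ^ (∑ i, ν i) :=
  stmt_15_general n d hd1 μH[d] S c₁ c₂ hc₁ hc₂ hreg R k
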